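/- Let ψ be a satisfiable set of assignments over a finite type V of propositional variables, and let Υ_ψ be the set of all variables that are dispensable w.r.t. ψ. Then Υ_ψ is deselectable w.r.t. ψ, i.e., there is a model of ψ assigning false to every dispensable variable simultaneously. -/

import Mathlib

/-- A set of variables `X` is deselectable w.r.t. `ψ` if some model of `ψ`
assigns `false` to every variable in `X`. -/
def Deselectable {V : Type*} (ψ : Set (V → Bool)) (X : Set V) : Prop :=
  ∃ α ∈ ψ, ∀ v ∈ X, α v = false

/-- A variable `v` is dispensable w.r.t. `ψ` if every deselectable set stays
deselectable after adding `v`. -/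
def Dispensable {V : Type*} (ψ : Set (V → Bool)) (v : V) : Prop :=
  ∀ X : Set V, Deselectable ψ X → Deselectable ψ (X ∪ {v})

section

variable {V : Type*} {ψ : Set (V → Bool)} {X Y : Set V} {v : V}

theorem deselectable_empty_iff : Deselectable ψ ∅ ↔ ψ.Nonempty := by
  simp [Deselectable, Set.Nonempty]

theorem Dispensable.deselectable_insert
    (hv : Dispensable ψ v) (hX : Deselectable ψ X) : Deselectable ψ (insert v X) := by
  rw [← Set.union_singleton]
  exact hv X hX

theorem deselectable_set_of_dispensables_general
    (hX : Deselectable ψ X) (hY : Y.Finite) (hdisp : ∀ v ∈ Y, Dispensable ψ v) :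
    Deselectable ψ (X ∪ Y) := by
  induction Y, hY using Set.Finite.induction_on with
  | empty => rwa [Set.union_empty]
  | @insert v Y _ _ ih =>
    obtain ⟨hv, hdispY⟩ := Set.forall_mem_insert.mp hdisp
    rw [Set.union_insert]
    exact hv.deselectable_insert (ih hdispY)

end

theorem deselectable_set_of_dispensables
    {V : Type*} [Finite V] (ψ : Set (V → Bool)) (hsat : ψ.Nonempty) :
    Deselectable ψ {v | Dispensable ψ v} := by
  simpa only [Set.empty_union] using deselectable_set_of_dispensables_general
    (deselectable_empty_iff.mpr hsat) (Set.toFinite {v | Dispensable ψ v}) fun _ hv ↦ hv
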